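/- For every integer p ≥ 1 and every integer e ≥ 3, there exists a level standard graded artinian algebra A of type 2, codimension r = 3p and socle degree e over k whose h-vector is (1, r, r, …, r, 2) (h_i = r for 1 ≤ i ≤ e−1, h_e = 2), such that every Gorenstein standard graded artinian quotient of A having socle degree e has codimension exactly 2p = r − ⌈(r−2)/3⌉. -/

import Mathlib

/-!
Split the `3 * p` variables into triples `x_i, y_i, z_i` and take the level algebra whose
Macaulay inverse system is generated by the two (divided power) forms
`F = ∑ x_i ^ (e - 1) * y_i` and `G = ∑ x_i ^ (e - 1) * z_i`.

In degree `1 ≤ j < e` the derivatives of `F` and `G` are spanned by the `3 * p` independent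
monomials `x_i ^ j`, `x_i ^ (j - 1) * y_i`, `x_i ^ (j - 1) * z_i`, which gives the `h`-vector
(`hilb_pairing`). Gorenstein quotients of socle degree `e` correspond to the nonzero combinations
`a * F + b * G = ∑ x_i ^ (e - 1) * (a * y_i + b * z_i)` (`gorenstein_quotient`), and each of these
involves exactly the `2 * p` linear forms `x_i` and `a * y_i + b * z_i` (`hilb_comp_pairing`).

The inverse system is encoded by the linear map `pairing` from polynomials to `k ^ 2` that
contracts against `F` and `G`; the defining ideal is the largest ideal in its kernel (`annih`),
which is level for formal reasons (`annih_level`).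
-/

open MvPolynomial

/-- The degree-`d` graded piece of the quotient `k[x_1,…,x_r]/I`, realized as the image of
the space of homogeneous polynomials of degree `d` in the quotient. -/
noncomputable def quotPiece (k : Type) [Field k] (r : ℕ)
    (I : Ideal (MvPolynomial (Fin r) k)) (d : ℕ) :
    Submodule k (MvPolynomial (Fin r) k ⧸ I) :=
  (homogeneousSubmodule (Fin r) k d).map (Ideal.Quotient.mkₐ k I).toLinearMap

/-- The Hilbert function of the quotient `k[x_1,…,x_r]/I`. -/
noncomputable def hilb (k : Type) [Field k] (r : ℕ)
    (I : Ideal (MvPolynomial (Fin r) k)) (d : ℕ) : ℕ :=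
  Module.finrank k (quotPiece k r I d)

/-- `A = k[x_1,…,x_r]/I` is a level standard graded artinian algebra of socle degree `e` and
type `t`: the ideal `I` is homogeneous, the Hilbert function of `A` vanishes in degrees `> e`
and equals `t` in degree `e`, and the socle of `A` (the annihilator of the irrelevant maximal
ideal) coincides with the degree-`e` graded piece `A_e`. -/
def IsLevelQuot (k : Type) [Field k] (r e t : ℕ)
    (I : Ideal (MvPolynomial (Fin r) k)) : Prop :=
  (∀ f ∈ I, ∀ d, homogeneousComponent d f ∈ I) ∧
  (∀ d, e < d → hilb k r I d = 0) ∧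
  hilb k r I e = t ∧
  {a : MvPolynomial (Fin r) k ⧸ I | ∀ i, a * Ideal.Quotient.mk I (X i) = 0} =
    (quotPiece k r I e : Set (MvPolynomial (Fin r) k ⧸ I))

/-! ### Level algebras from linear maps supported in one degree -/

section Duality

variable {k : Type} [Field k] {r : ℕ} {V W : Type*} [AddCommGroup V] [Module k V]
  [AddCommGroup W] [Module k W]

/-- The largest ideal contained in the kernel of a linear map `α` on the polynomial ring.
When `α` records the pairings with finitely many dual forms of one degree, this is the
annihilator of those forms under the contraction action (Macaulay's inverse system). -/
def annih (α : MvPolynomial (Fin r) k →ₗ[k] W) : Ideal (MvPolynomial (Fin r) k) where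
  carrier := {f | ∀ g, α (f * g) = 0}
  add_mem' := fun {a b} ha hb g => by
    have h1 := ha g
    have h2 := hb g
    rw [add_mul, map_add, h1, h2, add_zero]
  zero_mem' := fun g => by simp
  smul_mem' := fun c f hf g => by
    have h1 := hf (c * g)
    rwa [smul_eq_mul, mul_comm c f, mul_assoc]

lemma mem_annih {α : MvPolynomial (Fin r) k →ₗ[k] W} {f : MvPolynomial (Fin r) k} :
    f ∈ annih α ↔ ∀ g, α (f * g) = 0 := Iff.rfl

/-- `α` factors through the projection of the polynomial ring onto its degree-`e` part. -/
def PureDeg (e : ℕ) (α : MvPolynomial (Fin r) k →ₗ[k] W) : Prop :=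
  ∀ d, d ≠ e → ∀ f : MvPolynomial (Fin r) k, f.IsHomogeneous d → α f = 0

/-- The Hilbert function in degree `d` is the dimension of any space onto which the degree-`d`
forms map linearly with kernel exactly the degree-`d` part of the ideal. -/
lemma hilb_eq_finrank (I : Ideal (MvPolynomial (Fin r) k)) (d : ℕ)
    (T : MvPolynomial (Fin r) k →ₗ[k] V)
    (h : ∀ f : MvPolynomial (Fin r) k, f.IsHomogeneous d → (f ∈ I ↔ T f = 0))
    (hs : ∀ v, ∃ f : MvPolynomial (Fin r) k, f.IsHomogeneous d ∧ T f = v) :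
    hilb k r I d = Module.finrank k V := by
  set S := homogeneousSubmodule (Fin r) k d with hS
  set π := (Ideal.Quotient.mkₐ k I).toLinearMap with hπ
  have hker : LinearMap.ker (π.domRestrict S) = LinearMap.ker (T.domRestrict S) := by
    ext ⟨f, hf⟩
    have h1 := h f hf
    simp only [LinearMap.mem_ker, LinearMap.domRestrict_apply]
    rw [← h1]
    exact Ideal.Quotient.eq_zero_iff_mem
  have hrange : LinearMap.range (T.domRestrict S) = ⊤ := by
    rw [LinearMap.range_eq_top]
    intro v
    obtain ⟨f, hf, hv⟩ := hs v
    exact ⟨⟨f, hf⟩, hv⟩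
  have h1 : hilb k r I d = Module.finrank k (LinearMap.range (π.domRestrict S)) := by
    rw [LinearMap.range_domRestrict]
    rfl
  rw [h1, ← (π.domRestrict S).quotKerEquivRange.finrank_eq, hker,
    (T.domRestrict S).quotKerEquivRange.finrank_eq, hrange, finrank_top]

lemma hilb_eq_zero (I : Ideal (MvPolynomial (Fin r) k)) (d : ℕ)
    (h : ∀ f : MvPolynomial (Fin r) k, f.IsHomogeneous d → f ∈ I) : hilb k r I d = 0 := by
  rw [hilb_eq_finrank I d (0 : MvPolynomial (Fin r) k →ₗ[k] (Fin 0 → k))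
    (fun f hf => by simp [h f hf]) (fun v => ⟨0, isHomogeneous_zero _ _ _, Subsingleton.elim _ _⟩)]
  simp

lemma mem_of_hilb_eq_zero {I : Ideal (MvPolynomial (Fin r) k)} {d : ℕ}
    (h : hilb k r I d = 0) {f : MvPolynomial (Fin r) k} (hf : f.IsHomogeneous d) : f ∈ I := by
  have : Module.Finite k (homogeneousSubmodule (Fin r) k d) :=
    Module.Finite.iff_fg.2 (homogeneousSubmodule_fg _ _ d)
  have : Module.Finite k (quotPiece k r I d) := by
    unfold quotPiece; infer_instance
  have h0 : quotPiece k r I d = ⊥ := Submodule.finrank_eq_zero.1 h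
  have h1 : Ideal.Quotient.mk I f ∈ quotPiece k r I d := ⟨f, hf, rfl⟩
  rw [h0, Submodule.mem_bot] at h1
  exact Ideal.Quotient.eq_zero_iff_mem.1 h1

/-- A linear map that kills all products of `f` with forms kills all multiples of `f`. -/
lemma map_mul_eq_zero {α : MvPolynomial (Fin r) k →ₗ[k] W} {f : MvPolynomial (Fin r) k}
    (h : ∀ n, ∀ g : MvPolynomial (Fin r) k, g.IsHomogeneous n → α (f * g) = 0)
    (g : MvPolynomial (Fin r) k) : α (f * g) = 0 := by
  rw [← sum_homogeneousComponent g, Finset.mul_sum, map_sum]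
  exact Finset.sum_eq_zero fun i _ => h i _ (homogeneousComponent_isHomogeneous _ _)

lemma mem_annih_of_monomial {α : MvPolynomial (Fin r) k →ₗ[k] W} {f : MvPolynomial (Fin r) k}
    (h : ∀ m, α (f * monomial m 1) = 0) : f ∈ annih α := by
  intro g
  rw [g.as_sum, Finset.mul_sum, map_sum]
  refine Finset.sum_eq_zero fun m _ => ?_
  have h1 : monomial m (coeff m g) = coeff m g • monomial m (1 : k) := by
    rw [smul_monomial, smul_eq_mul, mul_one]
  rw [h1, mul_smul_comm, map_smul, h, smul_zero]

lemma pure_comp {V : Type*} [AddCommGroup V] [Module k V] {e : ℕ}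
    {α : MvPolynomial (Fin r) k →ₗ[k] W} (hα : PureDeg e α) (μ : W →ₗ[k] V) :
    PureDeg e (μ ∘ₗ α) := fun d hd f hf => by simp [hα d hd f hf]

lemma annih_homogeneous {e : ℕ} {α : MvPolynomial (Fin r) k →ₗ[k] W} (hα : PureDeg e α)
    {f : MvPolynomial (Fin r) k} (hf : f ∈ annih α) (d : ℕ) :
    homogeneousComponent d f ∈ annih α := by
  refine map_mul_eq_zero fun n g hg => ?_
  by_cases hdn : d + n = e
  · -- only the degree-`d` part of `f` contributes to the pairing with a form of degree `e - d`
    have h1 : α (f * g) = 0 := hf g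
    have h2 : α (f * g) = α (homogeneousComponent d f * g) := by
      have h3 : ∀ i, i ≠ d → α (homogeneousComponent i f * g) = 0 := fun i hi =>
        hα (i + n) (by omega) _ ((homogeneousComponent_isHomogeneous _ _).mul hg)
      by_cases hd : d ∈ Finset.range (f.totalDegree + 1)
      · conv_lhs => rw [← sum_homogeneousComponent f, Finset.sum_mul, map_sum]
        exact Finset.sum_eq_single_of_mem d hd fun i _ hi => h3 i hi
      · conv_lhs => rw [← sum_homogeneousComponent f, Finset.sum_mul, map_sum]
        rw [homogeneousComponent_eq_zero d f (by simpa using hd), zero_mul, map_zero]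
        exact Finset.sum_eq_zero fun i hi => h3 i fun h => hd (h ▸ hi)
    rw [← h2, h1]
  · exact hα _ hdn _ ((homogeneousComponent_isHomogeneous _ _).mul hg)

lemma mem_annih_of_gt {e d : ℕ} {α : MvPolynomial (Fin r) k →ₗ[k] W} (hα : PureDeg e α)
    (hd : e < d) {f : MvPolynomial (Fin r) k} (hf : f.IsHomogeneous d) : f ∈ annih α :=
  map_mul_eq_zero fun n _ hg => hα (d + n) (by omega) _ (hf.mul hg)

/-- In degree `e` the pairing is just evaluation of `α`. -/
lemma mem_annih_of_eq {e : ℕ} {α : MvPolynomial (Fin r) k →ₗ[k] W} (hα : PureDeg e α)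
    {f : MvPolynomial (Fin r) k} (hf : f.IsHomogeneous e) : f ∈ annih α ↔ α f = 0 := by
  refine ⟨fun h => by simpa using h 1, fun h => map_mul_eq_zero fun n g hg => ?_⟩
  by_cases hn : n = 0
  · subst hn
    rw [← totalDegree_zero_iff_isHomogeneous, totalDegree_eq_zero_iff_eq_C] at hg
    rw [hg, mul_comm, ← smul_eq_C_mul, map_smul, h, smul_zero]
  · exact hα _ (by omega) _ (hf.mul hg)

/-- The annihilator of a family of linearly independent dual forms of degree `e` is level. -/
lemma annih_level {e : ℕ} {α : MvPolynomial (Fin r) k →ₗ[k] W} (hα : PureDeg e α)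
    (hs : ∀ w, ∃ f : MvPolynomial (Fin r) k, f.IsHomogeneous e ∧ α f = w) :
    IsLevelQuot k r e (Module.finrank k W) (annih α) := by
  refine ⟨fun f hf d => annih_homogeneous hα hf d,
    fun d hd => hilb_eq_zero _ _ fun f hf => mem_annih_of_gt hα hd hf,
    hilb_eq_finrank _ _ α (fun f hf => mem_annih_of_eq hα hf) hs, ?_⟩
  ext a
  obtain ⟨f, rfl⟩ := Ideal.Quotient.mk_surjective a
  simp only [Set.mem_ofPred_eq, SetLike.mem_coe]
  constructor
  · intro h
    have h1 : ∀ i, f * X i ∈ annih α := fun i => by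
      rw [← Ideal.Quotient.eq_zero_iff_mem, map_mul]; exact h i
    refine ⟨homogeneousComponent e f, homogeneousComponent_isHomogeneous _ _, ?_⟩
    refine (Ideal.Quotient.eq.2 ?_ :
      Ideal.Quotient.mk (annih α) (homogeneousComponent e f) = Ideal.Quotient.mk (annih α) f)
    set f' := homogeneousComponent e f with hf'
    have hhom : f'.IsHomogeneous e := homogeneousComponent_isHomogeneous _ _
    have h2 : ∀ i, (f' - f) * X i ∈ annih α := fun i => by
      rw [sub_mul]
      exact sub_mem (mem_annih_of_gt hα (Nat.lt_succ_self e) (hhom.mul (isHomogeneous_X k i)))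
        (h1 i)
    have h3 : α (f' - f) = 0 := by
      rw [map_sub, sub_eq_zero]
      by_cases he : e ∈ Finset.range (f.totalDegree + 1)
      · conv_rhs => rw [← sum_homogeneousComponent f, map_sum]
        exact (Finset.sum_eq_single_of_mem e he fun i _ hi =>
          hα i hi _ (homogeneousComponent_isHomogeneous _ _)).symm
      · conv_rhs => rw [← sum_homogeneousComponent f, map_sum]
        rw [hf', homogeneousComponent_eq_zero e f (by simpa using he), map_zero]
        exact (Finset.sum_eq_zero fun i hi => hα i (fun h => he (h ▸ hi)) _
          (homogeneousComponent_isHomogeneous _ _)).symm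
    intro g
    induction g using MvPolynomial.induction_on with
    | C a => rw [mul_comm, ← smul_eq_C_mul, map_smul, h3, smul_zero]
    | add p q hp hq => rw [mul_add, map_add, hp, hq, add_zero]
    | mul_X p i _ => rw [mul_comm p, ← mul_assoc]; exact h2 i p
  · rintro ⟨f', hf', hff⟩ i
    have hff : Ideal.Quotient.mk (annih α) f' = Ideal.Quotient.mk (annih α) f := hff
    rw [← hff, ← map_mul, Ideal.Quotient.eq_zero_iff_mem]
    exact mem_annih_of_gt hα (Nat.lt_succ_self e) (IsHomogeneous.mul hf' (isHomogeneous_X k i))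

/-- Every Gorenstein quotient, of the same socle degree, of the algebra dual to `α` is dual to
`μ ∘ α` for a nonzero functional `μ`. -/
lemma gorenstein_quotient {e : ℕ} {α : MvPolynomial (Fin r) k →ₗ[k] W} (hα : PureDeg e α)
    (hs : ∀ w, ∃ f : MvPolynomial (Fin r) k, f.IsHomogeneous e ∧ α f = w)
    {J : Ideal (MvPolynomial (Fin r) k)} (hJ : annih α ≤ J) (hG : IsLevelQuot k r e 1 J) :
    ∃ μ : W →ₗ[k] k, μ ≠ 0 ∧ J = annih (μ ∘ₗ α) := by
  obtain ⟨hhom, hgt, hone, hsoc⟩ := hG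
  let K : Submodule k W :=
    (J.restrictScalars k ⊓ homogeneousSubmodule (Fin r) k e).map α
  have hK : ∀ f : MvPolynomial (Fin r) k, f.IsHomogeneous e → (f ∈ J ↔ α f ∈ K) := by
    intro f hf
    refine ⟨fun h => ⟨f, ⟨h, hf⟩, rfl⟩, ?_⟩
    rintro ⟨f', ⟨hf'J, hf'⟩, hff⟩
    have h1 : f - f' ∈ annih α :=
      (mem_annih_of_eq hα (hf.sub hf')).2 (by rw [map_sub, hff, sub_self])
    have h2 := add_mem (hJ h1) (show f' ∈ J from hf'J)
    rwa [sub_add_cancel] at h2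
  have hfr : Module.finrank k (W ⧸ K) = 1 := by
    rw [← hone]
    refine (hilb_eq_finrank J e (K.mkQ ∘ₗ α) (fun f hf => ?_) fun w => ?_).symm
    · rw [hK f hf]; simp
    · obtain ⟨w, rfl⟩ := K.mkQ_surjective w
      obtain ⟨f, hf, rfl⟩ := hs w
      exact ⟨f, hf, rfl⟩
  have : Module.Finite k (W ⧸ K) := Module.finite_of_finrank_pos (by omega)
  let φ : (W ⧸ K) ≃ₗ[k] k := LinearEquiv.ofFinrankEq _ _ (by rw [hfr, Module.finrank_self])
  let μ : W →ₗ[k] k := φ.toLinearMap ∘ₗ K.mkQ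
  have hμ : ∀ w, μ w = 0 ↔ w ∈ K := fun w => by simp [μ]
  have hpure : PureDeg e (μ ∘ₗ α) := pure_comp hα μ
  refine ⟨μ, ?_, ?_⟩
  · rintro h
    obtain ⟨w, hw⟩ := K.mkQ_surjective (φ.symm 1)
    have h1 : μ w = 1 := by
      change φ (K.mkQ w) = 1
      rw [hw]; simp
    rw [h] at h1
    simp at h1
  -- both ideals agree on forms of degree `e`
  have hKe : ∀ f : MvPolynomial (Fin r) k, f.IsHomogeneous e → (f ∈ J ↔ (μ ∘ₗ α) f = 0) :=
    fun f hf => by rw [hK f hf, LinearMap.comp_apply, hμ]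
  apply le_antisymm
  · intro f hf g
    have hfg : f * g ∈ J := J.mul_mem_right g hf
    have h1 : ∀ h, h ∈ J → (μ ∘ₗ α) h = 0 := by
      intro h hh
      rw [← sum_homogeneousComponent h, map_sum]
      refine Finset.sum_eq_zero fun i _ => ?_
      by_cases hi : i = e
      · subst hi
        exact (hKe _ (homogeneousComponent_isHomogeneous _ _)).1 (hhom h hh _)
      · exact hpure i hi _ (homogeneousComponent_isHomogeneous _ _)
    exact h1 _ hfg
  · -- a form of degree `d < e` orthogonal to everything is a socle element, hence zero
    have key : ∀ n d, e ≤ d + n → ∀ f : MvPolynomial (Fin r) k, f.IsHomogeneous d →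
        f ∈ annih (μ ∘ₗ α) → f ∈ J := by
      intro n
      induction n with
      | zero =>
        intro d hd f hf hfa
        rcases (show e < d ∨ d = e by omega) with h | rfl
        · exact mem_of_hilb_eq_zero (hgt d h) hf
        · exact (hKe f hf).2 ((mem_annih_of_eq hpure hf).1 hfa)
      | succ n ih =>
        intro d hd f hf hfa
        by_cases hde : e ≤ d
        · exact ih d (by omega) f hf hfa
        have h1 : Ideal.Quotient.mk J f ∈
            {a : MvPolynomial (Fin r) k ⧸ J | ∀ i, a * Ideal.Quotient.mk J (X i) = 0} := by
          intro i
          rw [← map_mul, Ideal.Quotient.eq_zero_iff_mem]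
          exact ih (d + 1) (by omega) _ (hf.mul (isHomogeneous_X k i))
            (Ideal.mul_mem_right _ _ hfa)
        rw [hsoc] at h1
        obtain ⟨f', hf', hff⟩ := h1
        have hff : Ideal.Quotient.mk J f' = Ideal.Quotient.mk J f := hff
        have h2 := hhom _ (Ideal.Quotient.eq.1 hff.symm) d
        rwa [map_sub, homogeneousComponent_of_mem hf, homogeneousComponent_of_mem hf',
          if_pos rfl, if_neg (by omega), sub_zero] at h2
    intro f hf
    rw [← sum_homogeneousComponent f]
    exact Submodule.sum_mem _ fun d _ => key e d (by omega) _
      (homogeneousComponent_isHomogeneous _ _) (annih_homogeneous hpure hf d)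

end Duality

/-! ### The forms `∑ x_i ^ (e - 1) * y_i` and `∑ x_i ^ (e - 1) * z_i` -/

section Construction

variable {k : Type} [Field k] {p : ℕ}

/-- The variables, arranged in `p` triples: `vr 0 i`, `vr 1 i`, `vr 2 i` play the roles of
`x_i`, `y_i`, `z_i`. -/
def vr (s : Fin 3) (i : Fin p) : Fin (3 * p) := finProdFinEquiv (s, i)

lemma vr_inj {s s' : Fin 3} {i i' : Fin p} : vr s i = vr s' i' ↔ s = s' ∧ i = i' := by
  simp [vr]

/-- The exponent of the degree-`j` monomial `x_i ^ (j - 1) * w`, where `w` is `x_i`, `y_i` or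
`z_i` according to `s`; meaningful for `1 ≤ j`. -/
noncomputable def ex (s : Fin 3) (i : Fin p) (j : ℕ) : Fin (3 * p) →₀ ℕ :=
  Finsupp.single (vr 0 i) (j - 1) + Finsupp.single (vr s i) 1

lemma ex_apply (s : Fin 3) (i : Fin p) (j : ℕ) (s' : Fin 3) (i' : Fin p) :
    ex s i j (vr s' i') =
      (if 0 = s' ∧ i = i' then j - 1 else 0) + (if s = s' ∧ i = i' then 1 else 0) := by
  simp only [ex, Finsupp.add_apply, Finsupp.single_apply, vr_inj]

lemma degree_ex (s : Fin 3) (i : Fin p) {j : ℕ} (hj : 1 ≤ j) : (ex s i j).degree = j := by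
  rw [ex, map_add, Finsupp.degree_single, Finsupp.degree_single]; omega

lemma ex_inj {s s' : Fin 3} {i i' : Fin p} {j : ℕ} (h : ex s i j = ex s' i' j) :
    s = s' ∧ i = i' := by
  have hi : i = i' := by
    by_contra hne
    have := DFunLike.congr_fun h (vr s i)
    rw [ex_apply, ex_apply] at this
    simp [Ne.symm hne] at this
  subst hi
  have h1 := add_left_cancel h
  rw [Finsupp.single_left_inj one_ne_zero, vr_inj] at h1
  exact h1

/-- A divisor of `x ^ c * y` is a power of `x`, possibly times `y`. -/
lemma divisor_eq {σ : Type*} {x y : σ} (hxy : x ≠ y) {n m : σ →₀ ℕ} {c : ℕ}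
    (h : n + m = Finsupp.single x c + Finsupp.single y 1) :
    n = Finsupp.single x (n x) + Finsupp.single y (n y) ∧ n y ≤ 1 := by
  classical
  constructor
  · ext w
    have hw := DFunLike.congr_fun h w
    simp only [Finsupp.add_apply, Finsupp.single_apply] at hw ⊢
    by_cases h1 : x = w
    · subst h1; simp [hxy.symm]
    · by_cases h2 : y = w
      · subst h2; simp [hxy]
      · simp only [h1, h2, if_false] at hw ⊢
        omega
  · have hw := DFunLike.congr_fun h y
    simp [hxy] at hw
    omega

/-- The degree-`j` divisors of `x_i ^ (e - 1) * y_i` are `x_i ^ j` and `x_i ^ (j - 1) * y_i`; the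
latter is expressed by its cofactor `x_i ^ (e - j)`. -/
lemma ex_divisor {t : Fin 2} {i : Fin p} {e j : ℕ} {n m : Fin (3 * p) →₀ ℕ} (hj : 1 ≤ j)
    (h : n + m = ex t.succ i e) (hn : n.degree = j) :
    n = ex 0 i j ∨ m = Finsupp.single (vr 0 i) (e - j) := by
  have hxy : vr 0 i ≠ vr t.succ i := by
    rw [Ne, vr_inj]; simp [(Fin.succ_ne_zero t).symm]
  obtain ⟨h1, h2⟩ := divisor_eq hxy h
  rw [h1, map_add, Finsupp.degree_single, Finsupp.degree_single] at hn
  rcases (show n (vr t.succ i) = 0 ∨ n (vr t.succ i) = 1 by omega) with h0 | h0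
  · left
    rw [h0, add_zero] at hn
    rw [h1, h0, hn, ex, ← Finsupp.single_add, Finsupp.single_zero, add_zero,
      Nat.sub_add_cancel hj]
  · right
    have hx := DFunLike.congr_fun h (vr 0 i)
    rw [Finsupp.add_apply, ex_apply] at hx
    simp at hx
    have hm := (divisor_eq hxy (n := m) (m := n) (by rw [add_comm]; exact h)).1
    have hy := DFunLike.congr_fun h (vr t.succ i)
    rw [Finsupp.add_apply, ex_apply, h0] at hy
    simp [(Fin.succ_ne_zero t).symm] at hy
    rw [hm, hy, Finsupp.single_zero, add_zero]
    congr 1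
    omega

/-- The pairing of a polynomial with the two dual forms `∑ x_i ^ (e - 1) * y_i` and
`∑ x_i ^ (e - 1) * z_i` (divided powers, so that no factorials appear). -/
noncomputable def pairing (k : Type) [Field k] (p e : ℕ) :
    MvPolynomial (Fin (3 * p)) k →ₗ[k] (Fin 2 → k) :=
  LinearMap.pi fun t => ∑ i, lcoeff k (ex t.succ i e)

lemma pairing_apply (e : ℕ) (f : MvPolynomial (Fin (3 * p)) k) (t : Fin 2) :
    pairing k p e f t = ∑ i, coeff (ex t.succ i e) f := by
  simp [pairing]

lemma pairing_pure {e : ℕ} (he : 1 ≤ e) : PureDeg e (pairing k p e) := by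
  intro d hd f hf
  ext t
  rw [pairing_apply]
  exact Finset.sum_eq_zero fun i _ => hf.coeff_eq_zero (by rw [degree_ex _ _ he]; exact hd.symm)

/-- Multiplying by `x_i ^ (e - 1 - j) * y_i` (or `z_i`) reads off the coefficient of `x_i ^ j`. -/
lemma pairing_mul_ex {e j : ℕ} (hj : 1 ≤ j) (hje : j < e) (f : MvPolynomial (Fin (3 * p)) k)
    (t : Fin 2) (i : Fin p) :
    pairing k p e (f * monomial (ex t.succ i (e - j)) 1) = Pi.single t (coeff (ex 0 i j) f) := by
  ext t'
  rw [pairing_apply]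
  by_cases ht : t = t'
  · subst ht
    rw [Pi.single_eq_same, Finset.sum_eq_single i]
    · have : ex t.succ i e = ex 0 i j + ex t.succ i (e - j) := by
        rw [ex, ex, ex, ← add_assoc, ← Finsupp.single_add, ← Finsupp.single_add]
        congr 2
        omega
      rw [this, coeff_mul_monomial, mul_one]
    · intro i' _ hi
      rw [coeff_mul_monomial', if_neg]
      intro hle
      have := hle (vr t.succ i)
      rw [ex_apply, ex_apply] at this
      simp [hi] at this
    · simp
  · rw [Pi.single_eq_of_ne (Ne.symm ht)]
    refine Finset.sum_eq_zero fun i' _ => ?_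
    rw [coeff_mul_monomial', if_neg]
    intro hle
    have := hle (vr t.succ i)
    rw [ex_apply, ex_apply] at this
    simp [Ne.symm ht, (Fin.succ_ne_zero t).symm] at this

/-- Multiplying by `x_i ^ (e - j)` reads off the coefficients of `x_i ^ (j - 1) * y_i` and
`x_i ^ (j - 1) * z_i`. -/
lemma pairing_mul_pow {e j : ℕ} (hj : 1 ≤ j) (hje : j < e) (f : MvPolynomial (Fin (3 * p)) k)
    (i : Fin p) :
    pairing k p e (f * monomial (Finsupp.single (vr 0 i) (e - j)) 1) =
      fun t => coeff (ex t.succ i j) f := by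
  ext t
  rw [pairing_apply, Finset.sum_eq_single i]
  · have : ex t.succ i e = ex t.succ i j + Finsupp.single (vr 0 i) (e - j) := by
      rw [ex, ex, add_right_comm, ← Finsupp.single_add]
      congr 2
      omega
    rw [this, coeff_mul_monomial, mul_one]
  · intro i' _ hi
    rw [coeff_mul_monomial', if_neg]
    intro hle
    have := hle (vr 0 i)
    rw [ex_apply] at this
    simp [hi] at this
    omega
  · simp

lemma pairing_mul_monomial_eq_zero {e j : ℕ} (hj : 1 ≤ j) {f : MvPolynomial (Fin (3 * p)) k}
    (hf : f.IsHomogeneous j) (h0 : ∀ i, coeff (ex 0 i j) f = 0) {m : Fin (3 * p) →₀ ℕ}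
    (hm : ∀ i, m ≠ Finsupp.single (vr 0 i) (e - j)) :
    pairing k p e (f * monomial m 1) = 0 := by
  ext t
  rw [pairing_apply]
  refine Finset.sum_eq_zero fun i _ => ?_
  rw [coeff_mul_monomial', mul_one]
  split_ifs with hle
  · by_cases hd : (ex t.succ i e - m).degree = j
    · rcases ex_divisor hj (tsub_add_cancel_of_le hle) hd with h | h
      · rw [h, h0]
      · exact absurd h (hm i)
    · exact hf.coeff_eq_zero hd
  · rfl

/-- Forms of degree `j` with prescribed coefficients at the monomials `ex s i j`. -/
lemma exists_coeff {j : ℕ} (hj : 1 ≤ j) (c : Fin 3 → Fin p → k) :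
    ∃ f : MvPolynomial (Fin (3 * p)) k, f.IsHomogeneous j ∧
      ∀ s i, coeff (ex s i j) f = c s i := by
  classical
  refine ⟨∑ q : Fin 3 × Fin p, monomial (ex q.1 q.2 j) (c q.1 q.2),
    IsHomogeneous.sum _ _ _ fun q _ => isHomogeneous_monomial _ (degree_ex _ _ hj), ?_⟩
  intro s i
  rw [coeff_sum, Finset.sum_eq_single (s, i)]
  · simp
  · rintro ⟨s', i'⟩ _ hne
    rw [coeff_monomial, if_neg]
    intro h
    obtain ⟨rfl, rfl⟩ := ex_inj h
    exact hne rfl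
  · simp

lemma pairing_surj {e : ℕ} (hp : 1 ≤ p) (he : 1 ≤ e) (w : Fin 2 → k) :
    ∃ f : MvPolynomial (Fin (3 * p)) k, f.IsHomogeneous e ∧ pairing k p e f = w := by
  obtain ⟨f, hf, hc⟩ := exists_coeff (k := k) (p := p) he
    (fun s i => if i = ⟨0, hp⟩ then Fin.cases 0 w s else 0)
  refine ⟨f, hf, ?_⟩
  ext t
  rw [pairing_apply]
  simp [hc]

/-- In degrees `1 ≤ j < e` the dual module has basis `x_i ^ j`, `x_i ^ (j - 1) * y_i`,
`x_i ^ (j - 1) * z_i`. -/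
lemma hilb_pairing {e j : ℕ} (hj : 1 ≤ j) (hje : j < e) :
    hilb k (3 * p) (annih (pairing k p e)) j = 3 * p := by
  rw [hilb_eq_finrank (V := Fin 3 × Fin p → k) _ _
    (LinearMap.pi fun q => lcoeff k (ex q.1 q.2 j))]
  · simp
  · intro f hf
    constructor
    · intro h
      ext ⟨s, i⟩
      simp only [LinearMap.pi_apply, lcoeff_apply, Pi.zero_apply]
      refine Fin.cases ?_ (fun t => ?_) s
      · have h1 := h (monomial (ex (0 : Fin 2).succ i (e - j)) 1)
        rw [pairing_mul_ex hj hje] at h1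
        simpa using h1
      · have h1 := h (monomial (Finsupp.single (vr 0 i) (e - j)) 1)
        rw [pairing_mul_pow hj hje] at h1
        exact congrFun h1 t
    · intro h
      have hc : ∀ s i, coeff (ex s i j) f = 0 := fun s i => congrFun h (s, i)
      refine mem_annih_of_monomial fun m => ?_
      by_cases hm : ∃ i, m = Finsupp.single (vr 0 i) (e - j)
      · obtain ⟨i, rfl⟩ := hm
        rw [pairing_mul_pow hj hje]
        ext t
        exact hc _ _
      · exact pairing_mul_monomial_eq_zero hj hf (hc 0) fun i hi => hm ⟨i, hi⟩
  · intro c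
    obtain ⟨f, hf, hc⟩ := exists_coeff (k := k) (p := p) hj fun s i => c (s, i)
    exact ⟨f, hf, by ext ⟨s, i⟩; exact hc s i⟩

/-- A nonzero combination `∑ x_i ^ (e - 1) * (a * y_i + b * z_i)` of the dual forms involves
exactly the `2 * p` independent linear forms `x_i` and `a * y_i + b * z_i`. -/
lemma hilb_comp_pairing {e : ℕ} (he : 2 ≤ e) {μ : (Fin 2 → k) →ₗ[k] k} (hμ : μ ≠ 0) :
    hilb k (3 * p) (annih (μ ∘ₗ pairing k p e)) 1 = 2 * p := by
  have hje : 1 < e := he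
  obtain ⟨t₀, ht₀⟩ : ∃ t, μ (Pi.single t 1) ≠ 0 := by
    by_contra! h
    exact hμ (LinearMap.pi_ext' fun t => LinearMap.ext_ring (by simpa using h t))
  rw [hilb_eq_finrank (V := (Fin p → k) × (Fin p → k)) _ _
    ((LinearMap.pi fun i => lcoeff k (ex 0 i 1)).prod
      (LinearMap.pi fun i => μ ∘ₗ LinearMap.pi fun t : Fin 2 => lcoeff k (ex t.succ i 1)))]
  · simp; ring
  · intro f hf
    constructor
    · intro h
      refine Prod.ext (funext fun i => ?_) (funext fun i => ?_)
      · change coeff (ex 0 i 1) f = 0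
        have h1 := h (monomial (ex t₀.succ i (e - 1)) 1)
        rw [LinearMap.comp_apply, pairing_mul_ex le_rfl hje, ← mul_one (coeff _ f),
          ← smul_eq_mul, Pi.single_smul, map_smul, smul_eq_mul] at h1
        exact (mul_eq_zero.1 h1).resolve_right ht₀
      · have h1 := h (monomial (Finsupp.single (vr 0 i) (e - 1)) 1)
        rw [LinearMap.comp_apply, pairing_mul_pow le_rfl hje] at h1
        exact h1
    · intro h
      obtain ⟨h1, h2⟩ := Prod.ext_iff.1 h
      refine mem_annih_of_monomial fun m => ?_
      rw [LinearMap.comp_apply]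
      by_cases hm : ∃ i, m = Finsupp.single (vr 0 i) (e - 1)
      · obtain ⟨i, rfl⟩ := hm
        rw [pairing_mul_pow le_rfl hje]
        exact congrFun h2 i
      · rw [pairing_mul_monomial_eq_zero le_rfl hf (fun i => congrFun h1 i)
          fun i hi => hm ⟨i, hi⟩, map_zero]
  · rintro ⟨a, b⟩
    obtain ⟨f, hf, hc⟩ := exists_coeff (k := k) (p := p) le_rfl fun s i =>
      Fin.cases (a i)
        (fun t => (b i * (μ (Pi.single t₀ 1))⁻¹) • (Pi.single t₀ (1 : k) : Fin 2 → k) t) s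
    refine ⟨f, hf, Prod.ext (funext fun i => hc 0 i) (funext fun i => ?_)⟩
    have h1 : (fun t : Fin 2 => coeff (ex t.succ i 1) f) =
        (b i * (μ (Pi.single t₀ 1))⁻¹) • (Pi.single t₀ (1 : k) : Fin 2 → k) :=
      funext fun t => hc t.succ i
    change μ (fun t : Fin 2 => coeff (ex t.succ i 1) f) = b i
    rw [h1, map_smul, smul_eq_mul, mul_assoc, inv_mul_cancel₀ ht₀, mul_one]

end Construction

/-- Remark 2.6 i) (case `r = 3p`): for every `p ≥ 1` and `e ≥ 3` there is a level algebra of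
type 2, codimension `r = 3p` and socle degree `e`, with `h`-vector `(1, r, r, …, r, 2)`, such
that every Gorenstein graded artinian quotient of socle degree `e` has codimension exactly
`2p = r - ⌈(r-2)/3⌉`. -/
theorem stmt18 (k : Type) [Field k] [CharZero k] (p e : ℕ) (hp : 1 ≤ p) (he : 3 ≤ e) :
    ∃ I : Ideal (MvPolynomial (Fin (3 * p)) k),
      IsLevelQuot k (3 * p) e 2 I ∧ hilb k (3 * p) I 1 = 3 * p ∧
      (∀ i, 1 ≤ i → i ≤ e - 1 → hilb k (3 * p) I i = 3 * p) ∧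
      (∀ C : Ideal (MvPolynomial (Fin (3 * p)) k), I ≤ C →
          IsLevelQuot k (3 * p) e 1 C → hilb k (3 * p) C 1 = 2 * p) ∧
      2 * p = 3 * p - (3 * p - 2 + 2) / 3 := by
  have hpure : PureDeg e (pairing k p e) := pairing_pure (by omega)
  have hsurj := pairing_surj (k := k) (e := e) hp (by omega)
  refine ⟨annih (pairing k p e), ?_, hilb_pairing le_rfl (by omega),
    fun i h1 h2 => hilb_pairing h1 (by omega), fun J hJ hG => ?_, by omega⟩
  · have := annih_level hpure hsurj
    rwa [Module.finrank_fin_fun] at this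
  · obtain ⟨μ, hμ, rfl⟩ := gorenstein_quotient hpure hsurj hJ hG
    exact hilb_comp_pairing (by omega) hμ
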